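/- Let A be a commutative semiring and ⋀ the exterior semialgebra over A. For every r ≥ 1 and every partition λ = (λ_1 ≥ ⋯ ≥ λ_r) with at most r parts, writing λ + (1^r) = (λ_1+1, …, λ_r+1): x^0 ∧ [x]^r_{λ+(1^r)} ⪯ w^{−r} · (σ̄_+(w)(σ_-(w)[x]^r_λ)) ∧ x^0, coefficientwise in the powers of w. -/

import Mathlib

/-!  The exterior semialgebra over a commutative semiring `A`, following
Chapman–Gatto–Rowen.  It is the free `A`-module on the basis consisting of a
unit symbol `1` (here `none`) together with all pairs `(ε, s)` where
`ε ∈ {+1, −1}` (here a `Bool`, `true = +1`) and `s` is a strictly decreasing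
nonempty tuple of natural numbers (here a nonempty `Finset ℕ`, read in
decreasing order).  -/

namespace ExtSemi

/-- The basis: `none` is the unit `1`; `some (ε, s)` is the sign `ε` times the
strictly decreasing wedge monomial on the nonempty finite set `s`. -/
abbrev XB : Type := Option (Bool × {s : Finset ℕ // s.Nonempty})

variable (A : Type*) [CommSemiring A]

/-- The exterior semialgebra `⋀`: the free `A`-module on `XB`. -/
abbrev Ext : Type _ := XB →₀ A

/-- Sign flip on the basis; the unit is fixed. -/
def negB : XB → XB
  | none => none
  | some (ε, s) => some (!ε, s)

/-- The negation map `(−)` on `⋀`: the `A`-linear map sending `(ε, s)` to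
`(−ε, s)` and fixing `1`. -/
noncomputable def neg : Ext A →ₗ[A] Ext A := Finsupp.lmapDomain A A negB

/-- The signed basis element attached to a sign and a finite set; the empty set
gives the unit (on which the negation acts trivially). -/
noncomputable def bElem (ε : Bool) (t : Finset ℕ) : Ext A :=
  if h : t.Nonempty then Finsupp.single (some (ε, ⟨t, h⟩)) 1 else Finsupp.single none 1

/-- The unit `1` of `⋀`. -/
noncomputable def one : Ext A := Finsupp.single (none : XB) 1

/-- The generator `x^i`. -/
noncomputable def xg (i : ℕ) : Ext A := bElem A true {i}

/-- `true` iff merging the decreasing enumerations of the disjoint sets `s`, `t`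
(concatenated as `s ++ t`) into a single decreasing enumeration is an even
permutation, i.e. iff the number of pairs `(a ∈ s, b ∈ t)` with `a < b` is even. -/
def mergeEven (s t : Finset ℕ) : Bool :=
  decide ((∑ a ∈ s, (t.filter (fun b => a < b)).card) % 2 = 0)

/-- Wedge product of two basis elements: concatenate the tuples and multiply the
signs (`0` if the tuples share an entry). -/
noncomputable def wB : XB → XB → Ext A
  | none, c => Finsupp.single c 1
  | some b, none => Finsupp.single (some b) 1
  | some (ε, s), some (δ, t) =>
      if s.1 ∩ t.1 = ∅ then bElem A ((ε == δ) == mergeEven s.1 t.1) (s.1 ∪ t.1) else 0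

/-- The wedge product on `⋀`, extended `A`-bilinearly from the basis. -/
noncomputable def wedge (u v : Ext A) : Ext A :=
  u.sum fun b a => v.sum fun c a' => (a * a') • wB A b c

/-- Extend a map defined on the basis `A`-linearly to all of `⋀`. -/
noncomputable def ext1 (g : XB → Ext A) (u : Ext A) : Ext A := u.sum fun b a => a • g b

/-- Quasi-zeros: elements of the form `w + (−)w`. -/
def IsQuasiZero (q : Ext A) : Prop := ∃ w : Ext A, q = w + neg A w

/-- The surpassing relation: `u ⪯ v` iff `v = u + q` for some quasi-zero `q`. -/
def Prec (u v : Ext A) : Prop := ∃ q : Ext A, IsQuasiZero A q ∧ v = u + q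

/-- Twist an element by a sign. -/
noncomputable def twist (ε : Bool) (u : Ext A) : Ext A := if ε then u else neg A u

/-- `k`-fold application of the negation map. -/
noncomputable def negpow (k : ℕ) (u : Ext A) : Ext A := if k % 2 = 0 then u else neg A u

/-- Wedge product of a list of elements of `⋀`. -/
noncomputable def wedgeL (l : List (Ext A)) : Ext A := l.foldr (wedge A) (one A)

/-- The wedge monomial `x^{j_1} ∧ ⋯ ∧ x^{j_r}` for an arbitrary tuple. -/
noncomputable def wedgeMon (l : List ℕ) : Ext A := wedgeL A (l.map (xg A))

/-- The decreasing enumeration of a finite set of naturals. -/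
def descList (s : Finset ℕ) : List ℕ := (s.sort (· ≤ ·)).reverse

/-- The contraction `∂^j ⌟` on basis elements:
`∂^j ⌟ (x^{i_1} ∧ ⋯ ∧ x^{i_r}) = Σ_k (−)^{k−1}[i_k = j]·x^{i_1} ∧ ⋯ ∧ x^{i_{k-1}} ∧ x^{i_{k+1}} ∧ ⋯ ∧ x^{i_r}`,
`∂^j ⌟ 1 = 0`; it commutes with the negation map. -/
noncomputable def contraB (j : ℕ) : XB → Ext A
  | none => 0
  | some (ε, s) =>
      if j ∈ s.1 then
        twist A ε (negpow A ((s.1.filter (fun b => j < b)).card) (bElem A true (s.1.erase j)))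
      else 0

/-- The contraction `∂^j ⌟` on `⋀`, extended `A`-linearly. -/
noncomputable def contra (j : ℕ) (u : Ext A) : Ext A := ext1 A (contraB A j) u

/-- Make an `A`-linear operator on `⋀` commuting with the negation map out of a
coefficient family on decreasing lists (`F k l` = the `k`-th coefficient on the
monomial with decreasing tuple `l`); the unit is sent to itself in degree `0`. -/
noncomputable def hsOn (F : ℕ → List ℕ → Ext A) (k : ℕ) : XB → Ext A
  | none => if k = 0 then one A else 0
  | some (ε, s) => twist A ε (F k (descList s.1))

open Finset.Nat in
/-- Coefficient of `z^k` in `σ₊(z)` on a monomial: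
`σ_k (x^{i_1} ∧ ⋯ ∧ x^{i_r}) = Σ_{k_1+⋯+k_r=k} x^{i_1+k_1} ∧ ⋯ ∧ x^{i_r+k_r}`. -/
noncomputable def sigPlusL (k : ℕ) (l : List ℕ) : Ext A :=
  ∑ c ∈ antidiagonalTuple l.length k,
    wedgeMon A (List.ofFn fun i : Fin l.length => l.get i + c i)

/-- Coefficient of `z^k` in the Schubert derivation `σ₊(z)`. -/
noncomputable def sigPlus (k : ℕ) : Ext A → Ext A := ext1 A (hsOn A (sigPlusL A) k)

open Finset.Nat in
/-- Coefficient of `w^{−k}` in `σ₋(w)`, where `σ₋(w) x^j = Σ_{k=0}^{j} x^{j−k} w^{−k}`. -/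
noncomputable def sigMinusL (k : ℕ) (l : List ℕ) : Ext A :=
  ∑ c ∈ antidiagonalTuple l.length k,
    if ∀ i, c i ≤ l.get i then
      wedgeMon A (List.ofFn fun i : Fin l.length => l.get i - c i)
    else 0

/-- Coefficient of `w^{−k}` in the Schubert derivation `σ₋(w)`. -/
noncomputable def sigMinus (k : ℕ) : Ext A → Ext A := ext1 A (hsOn A (sigMinusL A) k)

open Finset.Nat in
/-- Coefficient of `z^{−k}` in `σ̄₋(z)`, where `σ̄₋(z) x^j = x^j + ((−)x^{j−1}) z^{−1}`
(`x^{−1} := 0`). -/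
noncomputable def sbarMinusL (k : ℕ) (l : List ℕ) : Ext A :=
  negpow A k (∑ c ∈ antidiagonalTuple l.length k,
    if ∀ i, c i ≤ 1 ∧ c i ≤ l.get i then
      wedgeMon A (List.ofFn fun i : Fin l.length => l.get i - c i)
    else 0)

/-- Coefficient of `z^{−k}` in the Schubert derivation `σ̄₋(z)`. -/
noncomputable def sbarMinus (k : ℕ) : Ext A → Ext A := ext1 A (hsOn A (sbarMinusL A) k)

open Finset.Nat in
/-- Coefficient of `w^k` in `σ̄₊(w)`, where `σ̄₊(w) x^j = x^j + ((−)x^{j+1}) w`. -/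
noncomputable def sbarPlusL (k : ℕ) (l : List ℕ) : Ext A :=
  negpow A k (∑ c ∈ antidiagonalTuple l.length k,
    if ∀ i, c i ≤ 1 then
      wedgeMon A (List.ofFn fun i : Fin l.length => l.get i + c i)
    else 0)

/-- Coefficient of `w^k` in the Schubert derivation `σ̄₊(w)`. -/
noncomputable def sbarPlus (k : ℕ) : Ext A → Ext A := ext1 A (hsOn A (sbarPlusL A) k)

/-- The basis element `[x]^r_λ = x^{r−1+λ_1} ∧ x^{r−2+λ_2} ∧ ⋯ ∧ x^{λ_r}`
attached to a partition `λ` with at most `r` parts. -/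
noncomputable def xlam (r : ℕ) (lam : Fin r → ℕ) : Ext A :=
  wedgeMon A (List.ofFn fun i : Fin r => (r - 1 - (i : ℕ)) + lam i)

end ExtSemi

/-!
The exterior semialgebra over `A` and all the operators involved are base changes from `ℕ`. Over
`ℕ`, if no signed monomial occurs in `u` together with its negative, then `u ⪯ v` as soon as `u` and
`v` have the same image in the exterior algebra over `ℤ`; a wedge monomial is such a `u`.

In the exterior algebra `σ̄₊(w) ∘ σ₋(w)` is multiplicative with values in Laurent polynomials, and
it telescopes on generators: `x^j ↦ x^0 w^{-j} - x^{j+1} w`. Multiplying by `x^0` kills the first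
terms, and moving `x^0` past the `r` factors `-x^{j+1} w` cancels their signs.
-/

namespace ExtSemi

open Module Polynomial
open Finset.HasAntidiagonal (antidiagonal mem_antidiagonal swap_mem_antidiagonal)
open LaurentPolynomial (T)
open scoped LaurentPolynomial

section GeneratorProducts

variable (R : Type*) [CommRing R] {I : Type*}

/-- The generator `x^i` of the exterior algebra of the free `R`-module on `I`. -/
noncomputable def gen (i : I) : ExteriorAlgebra R (I →₀ R) :=
  ExteriorAlgebra.ι R (Finsupp.single i 1)

/-- The product of the generators listed in `l`, the exterior-algebra counterpart of `wedgeMon`. -/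
noncomputable def genProd (l : List I) : ExteriorAlgebra R (I →₀ R) := (l.map (gen R)).prod

theorem genProd_cons (i : I) (l : List I) : genProd R (i :: l) = gen R i * genProd R l := by
  simp [genProd]

theorem gen_mul_self (i : I) : gen R i * gen R i = 0 := ExteriorAlgebra.ι_sq_zero _

theorem gen_mul_gen_swap (i j : I) : gen R i * gen R j = -(gen R j * gen R i) :=
  eq_neg_of_add_eq_zero_left (ExteriorAlgebra.ι_add_mul_swap _ _)

theorem gen_mul_gen_mul_swap (i j : I) (u : ExteriorAlgebra R (I →₀ R)) :
    gen R i * (gen R j * u) = -(gen R j * (gen R i * u)) := by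
  rw [← mul_assoc, gen_mul_gen_swap, neg_mul, mul_assoc]

theorem gen_mul_genProd_of_mem {i : I} {l : List I} (hi : i ∈ l) :
    gen R i * genProd R l = 0 := by
  induction l with
  | nil => simp at hi
  | cons j l ih =>
    rw [genProd_cons]
    rcases List.mem_cons.1 hi with rfl | hi
    · rw [← mul_assoc, gen_mul_self, zero_mul]
    · rw [gen_mul_gen_mul_swap, ih hi, mul_zero, neg_zero]

theorem exists_genProd_eq_units_smul_of_perm {l l' : List I} (h : l.Perm l') :
    ∃ u : Rˣ, genProd R l = u • genProd R l' := by
  induction h with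
  | nil => exact ⟨1, (one_smul _ _).symm⟩
  | cons i _ ih =>
    obtain ⟨u, hu⟩ := ih
    exact ⟨u, by rw [genProd_cons, genProd_cons, hu, mul_smul_comm]⟩
  | swap i j l =>
    refine ⟨-1, ?_⟩
    simp only [genProd_cons]
    rw [gen_mul_gen_mul_swap, Units.neg_smul, one_smul]
  | trans _ _ ih₁ ih₂ =>
    obtain ⟨u, hu⟩ := ih₁
    obtain ⟨v, hv⟩ := ih₂
    exact ⟨u * v, by rw [hu, hv, mul_smul]⟩

variable [LinearOrder I]

/-- The product of the generators indexed by `s` in decreasing order. -/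
noncomputable def decProd (s : Finset I) : ExteriorAlgebra R (I →₀ R) :=
  genProd R (s.sort (· ≥ ·))

@[simp]
theorem decProd_empty : decProd R (∅ : Finset I) = 1 := by simp [decProd, genProd]

theorem decProd_insert {s : Finset I} {i : I} (h : ∀ j ∈ s, j < i) :
    decProd R (insert i s) = gen R i * decProd R s := by
  rw [decProd, Finset.sort_insert _ (fun j hj => (h j hj).le) fun hi => (h i hi).false,
    genProd_cons, decProd]

@[simp]
theorem decProd_singleton (i : I) : decProd R {i} = gen R i := by
  simpa using decProd_insert R (s := ∅) (i := i) (by simp)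

theorem gen_mul_decProd_of_mem {i : I} {s : Finset I} (hi : i ∈ s) :
    gen R i * decProd R s = 0 :=
  gen_mul_genProd_of_mem R ((Finset.mem_sort _).2 hi)

theorem gen_mul_decProd_of_notMem {i : I} {s : Finset I} (hi : i ∉ s) :
    gen R i * decProd R s = (-1 : R) ^ (s.filter (i < ·)).card • decProd R (insert i s) := by
  induction s using Finset.induction_on_max with
  | empty => simp
  | insert m s hm ih =>
    obtain ⟨him, his⟩ : i ≠ m ∧ i ∉ s := by simpa using hi
    rcases him.lt_or_gt with him | hmi
    · have hmax : ∀ j ∈ insert i s, j < m := by simpa [him] using hm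
      have hms : m ∉ s.filter (i < ·) := fun h => (hm m (Finset.mem_of_mem_filter m h)).false
      rw [decProd_insert R hm, gen_mul_gen_mul_swap, ih his, mul_smul_comm,
        ← decProd_insert R hmax, Finset.insert_comm, Finset.filter_insert, if_pos him,
        Finset.card_insert_of_notMem hms, pow_succ, mul_neg_one, neg_smul]
    · have hmax : ∀ j ∈ insert m s, j < i := by
        simpa [hmi] using fun j hj => (hm j hj).trans hmi
      rw [decProd_insert R hmax, Finset.filter_false_of_mem fun j hj => (hmax j hj).not_gt,
        Finset.card_empty, pow_zero, one_smul]

theorem decProd_mul_decProd_of_disjoint {s t : Finset I} (h : Disjoint s t) :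
    decProd R s * decProd R t =
      (-1 : R) ^ (∑ i ∈ s, (t.filter (i < ·)).card) • decProd R (s ∪ t) := by
  induction s using Finset.induction_on_max with
  | empty => simp
  | insert m s hm ih =>
    obtain ⟨hmt, hst⟩ := Finset.disjoint_insert_left.1 h
    have hms : m ∉ s := fun hms => (hm m hms).false
    have hfilter : (s ∪ t).filter (m < ·) = t.filter (m < ·) := by
      rw [Finset.filter_union, Finset.filter_false_of_mem fun j hj => (hm j hj).not_gt,
        Finset.empty_union]
    rw [decProd_insert R hm, mul_assoc, ih hst, mul_smul_comm,
      gen_mul_decProd_of_notMem R (by simp [hms, hmt]), hfilter, smul_smul, ← pow_add,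
      Finset.sum_insert hms, add_comm, Finset.insert_union]

theorem decProd_mul_decProd_of_not_disjoint {s t : Finset I} (h : ¬Disjoint s t) :
    decProd R s * decProd R t = 0 := by
  induction s using Finset.induction_on_max with
  | empty => simp at h
  | insert m s hm ih =>
    rw [decProd_insert R hm, mul_assoc]
    by_cases hst : Disjoint s t
    · have hmt : m ∈ t := by
        by_contra hmt
        exact h (Finset.disjoint_insert_left.2 ⟨hmt, hst⟩)
      rw [decProd_mul_decProd_of_disjoint R hst, mul_smul_comm,
        gen_mul_decProd_of_mem R (Finset.mem_union_right s hmt), smul_zero]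
    · rw [ih hst, mul_zero]

theorem exists_basis_eq_genProd (s : Finset I) : ∃ l : List I, l.Perm (s.sort (· ≥ ·)) ∧
    (Finsupp.basisSingleOne (R := R)).ExteriorAlgebra s = genProd R l := by
  let e := Set.powersetCard.ofFinEmbEquiv.symm (Set.powersetCard.ofCard (s := s) rfl)
  refine ⟨List.ofFn e, ?_, ?_⟩
  · refine (List.perm_ext_iff_of_nodup (List.nodup_ofFn.2 e.injective) (s.sort_nodup _)).2 ?_
    intro i
    rw [List.mem_ofFn, Finset.mem_sort]
    exact Set.powersetCard.mem_range_ofFinEmbEquiv_symm_iff_mem _ i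
  · rw [ExteriorAlgebra.basis_apply_ofCard _ (rfl : s.card = s.card), genProd, List.map_ofFn]
    change (List.ofFn fun k => ExteriorAlgebra.ι R (Finsupp.basisSingleOne _)).prod = _
    simp only [Finsupp.coe_basisSingleOne]
    rfl

theorem exists_units_smul_basis_eq_decProd (s : Finset I) :
    ∃ u : Rˣ, u • (Finsupp.basisSingleOne (R := R)).ExteriorAlgebra s = decProd R s := by
  obtain ⟨l, hl, hs⟩ := exists_basis_eq_genProd R s
  obtain ⟨u, hu⟩ := exists_genProd_eq_units_smul_of_perm R hl.symm
  exact ⟨u, by rw [hs, decProd, hu]⟩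

/-- The basis of the exterior algebra formed by the decreasing products of generators. It differs
by signs from Mathlib's basis, which uses increasing products. -/
noncomputable def decBasis : Basis (Finset I) R (ExteriorAlgebra R (I →₀ R)) :=
  (Finsupp.basisSingleOne (R := R)).ExteriorAlgebra.unitsSMul
    fun s => (exists_units_smul_basis_eq_decProd R s).choose

theorem decBasis_apply (s : Finset I) : decBasis R s = decProd R s :=
  (Basis.unitsSMul_apply s).trans (exists_units_smul_basis_eq_decProd R s).choose_spec

theorem decBasis_repr_decProd (s : Finset I) :
    (decBasis R).repr (decProd R s) = Finsupp.single s 1 := by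
  rw [← decBasis_apply, Basis.repr_self]

theorem decBasis_repr_one :
    (decBasis R).repr (1 : ExteriorAlgebra R (I →₀ R)) = Finsupp.single ∅ 1 := by
  rw [← decProd_empty, decBasis_repr_decProd]

end GeneratorProducts

section HasseSchmidt

variable (R : Type*) [CommRing R] {I M : Type*} [AddCommGroup M] [Module R M]

theorem mul_self_eq_zero_of_coeff_mem_range_ι {p : (ExteriorAlgebra R M)[X]}
    (hp : ∀ n, p.coeff n ∈ LinearMap.range (ExteriorAlgebra.ι R (M := M))) : p * p = 0 := by
  choose m hm using hp
  ext n
  rw [coeff_mul, coeff_zero]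
  simp only [← hm]
  refine Finset.sum_involution (fun ij _ => ij.swap)
    (fun _ _ => ExteriorAlgebra.ι_add_mul_swap _ _) (fun ij _ hij heq => hij ?_)
    (fun _ hij => swap_mem_antidiagonal.2 hij) (fun _ _ => Prod.swap_swap _)
  have hdiag : ij.2 = ij.1 := congrArg Prod.fst heq
  rw [hdiag, ExteriorAlgebra.ι_sq_zero]

variable {R}

/-- The Hasse–Schmidt derivation of the exterior algebra, written as an algebra homomorphism to
polynomials, whose value on the generator `x^i` is the polynomial `p i`. -/
noncomputable def hasseSchmidt (p : I → (ExteriorAlgebra R (I →₀ R))[X])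
    (hp : ∀ i n, (p i).coeff n ∈ LinearMap.range (ExteriorAlgebra.ι R (M := I →₀ R))) :
    ExteriorAlgebra R (I →₀ R) →ₐ[R] (ExteriorAlgebra R (I →₀ R))[X] :=
  ExteriorAlgebra.lift R ⟨Finsupp.linearCombination R p, fun m =>
    mul_self_eq_zero_of_coeff_mem_range_ι R fun n => by
      rw [Finsupp.linearCombination_apply, Finsupp.sum, finsetSum_coeff]
      simp only [coeff_smul]
      exact Submodule.sum_mem _ fun i _ => Submodule.smul_mem _ _ (hp i n)⟩

theorem hasseSchmidt_gen (p : I → (ExteriorAlgebra R (I →₀ R))[X])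
    (hp : ∀ i n, (p i).coeff n ∈ LinearMap.range (ExteriorAlgebra.ι R (M := I →₀ R))) (i : I) :
    hasseSchmidt p hp (gen R i) = p i := by
  simp [hasseSchmidt, gen]

theorem hasseSchmidt_genProd (p : I → (ExteriorAlgebra R (I →₀ R))[X])
    (hp : ∀ i n, (p i).coeff n ∈ LinearMap.range (ExteriorAlgebra.ι R (M := I →₀ R)))
    (l : List I) : hasseSchmidt p hp (genProd R l) = (l.map p).prod := by
  simp [genProd, map_list_prod, Function.comp_def, hasseSchmidt_gen]

end HasseSchmidt

section SchubertDerivations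

theorem sum_antidiagonalTuple_succ {N : Type*} [AddCommMonoid N] (n k : ℕ)
    (F : (Fin (n + 1) → ℕ) → N) :
    ∑ c ∈ Finset.Nat.antidiagonalTuple (n + 1) k, F c =
      ∑ ab ∈ antidiagonal k,
        ∑ c ∈ Finset.Nat.antidiagonalTuple n ab.2, F (Fin.cons ab.1 c) := by
  rw [Finset.sum_sigma']
  refine (Finset.sum_bij' (fun x _ => Fin.cons x.1.1 x.2)
    (fun c _ => ⟨(c 0, ∑ i, Fin.tail c i), Fin.tail c⟩) ?_ ?_ ?_ ?_ ?_).symm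
  · simp +contextual [Finset.Nat.mem_antidiagonalTuple, Fin.sum_univ_succ]
  · simp +contextual [Finset.Nat.mem_antidiagonalTuple, Fin.sum_univ_succ, Fin.tail]
  · rintro ⟨⟨a, b⟩, c⟩ h
    obtain rfl : ∑ i, c i = b :=
      Finset.Nat.mem_antidiagonalTuple.1 (Finset.mem_sigma.1 h).2
    simp
  · simp
  · simp

variable (R : Type*) [CommRing R]

theorem coeff_prod_map_of_coeff_eq_ite {I : Type*} {q : I → (ExteriorAlgebra R (I →₀ R))[X]}
    {P : I → ℕ → Prop} [∀ i c, Decidable (P i c)] {g : I → ℕ → I} {a : R}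
    (hq : ∀ i c, (q i).coeff c = if P i c then a ^ c • gen R (g i c) else 0)
    (l : List I) (k : ℕ) :
    (l.map q).prod.coeff k = a ^ k • ∑ c ∈ Finset.Nat.antidiagonalTuple l.length k,
      if ∀ i, P (l.get i) (c i) then
        genProd R (List.ofFn fun i => g (l.get i) (c i)) else 0 := by
  induction l generalizing k with
  | nil => cases k <;> simp [coeff_one, genProd]
  | cons i l ih =>
    rw [List.map_cons, List.prod_cons, coeff_mul]
    simp only [List.length_cons]
    rw [sum_antidiagonalTuple_succ, Finset.smul_sum]
    refine Finset.sum_congr rfl fun bc hbc => ?_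
    have hmul : (q i).coeff bc.1 * (l.map q).prod.coeff bc.2 =
        a ^ k • ((if P i bc.1 then gen R (g i bc.1) else 0) *
          ∑ c ∈ Finset.Nat.antidiagonalTuple l.length bc.2, if ∀ j, P (l.get j) (c j) then
            genProd R (List.ofFn fun j => g (l.get j) (c j)) else 0) := by
      rw [hq, ih, ← mem_antidiagonal.1 hbc, pow_add, mul_smul_comm, mul_comm (a ^ bc.1), mul_smul]
      split_ifs <;> simp
    rw [hmul, Finset.mul_sum]
    refine congrArg _ (Finset.sum_congr rfl fun c _ => ?_)
    by_cases h : P i bc.1 <;> simp [h, Fin.forall_fin_succ, genProd_cons]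

/-- The polynomial `x^j + x^{j-1} X + ⋯ + x^0 X^j`, which is `σ₋(w) x^j` with `X = w⁻¹`. -/
noncomputable def sigMinusGen (j : ℕ) : (ExteriorAlgebra R (ℕ →₀ R))[X] :=
  ∑ k ∈ Finset.range (j + 1), monomial k (gen R (j - k))

theorem coeff_sigMinusGen (j c : ℕ) :
    (sigMinusGen R j).coeff c = if c ≤ j then (1 : R) ^ c • gen R (j - c) else 0 := by
  simp [sigMinusGen, coeff_monomial]

/-- The polynomial `x^j - x^{j+1} X`, which is `σ̄₊(w) x^j` with `X = w`. -/
noncomputable def sbarPlusGen (j : ℕ) : (ExteriorAlgebra R (ℕ →₀ R))[X] :=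
  monomial 0 (gen R j) - monomial 1 (gen R (j + 1))

theorem coeff_sbarPlusGen (j c : ℕ) :
    (sbarPlusGen R j).coeff c = if c ≤ 1 then (-1 : R) ^ c • gen R (j + c) else 0 := by
  rcases c with _ | _ | c <;> simp [sbarPlusGen, coeff_monomial]

/-- The Schubert derivation `σ₋(w)` of the exterior algebra, as a homomorphism to polynomials in
`X = w⁻¹`. -/
noncomputable def sigMinusHom :
    ExteriorAlgebra R (ℕ →₀ R) →ₐ[R] (ExteriorAlgebra R (ℕ →₀ R))[X] :=
  hasseSchmidt (sigMinusGen R) fun j c => by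
    rw [coeff_sigMinusGen]
    split_ifs
    exacts [Submodule.smul_mem _ _ ⟨_, rfl⟩, Submodule.zero_mem _]

/-- The Schubert derivation `σ̄₊(w)` of the exterior algebra, as a homomorphism to polynomials in
`X = w`. -/
noncomputable def sbarPlusHom :
    ExteriorAlgebra R (ℕ →₀ R) →ₐ[R] (ExteriorAlgebra R (ℕ →₀ R))[X] :=
  hasseSchmidt (sbarPlusGen R) fun j c => by
    rw [coeff_sbarPlusGen]
    split_ifs
    exacts [Submodule.smul_mem _ _ ⟨_, rfl⟩, Submodule.zero_mem _]

theorem sigMinusHom_gen (j : ℕ) : sigMinusHom R (gen R j) = sigMinusGen R j :=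
  hasseSchmidt_gen _ _ j

theorem sbarPlusHom_gen (j : ℕ) : sbarPlusHom R (gen R j) = sbarPlusGen R j :=
  hasseSchmidt_gen _ _ j

theorem coeff_sigMinusHom_genProd (l : List ℕ) (k : ℕ) :
    (sigMinusHom R (genProd R l)).coeff k = ∑ c ∈ Finset.Nat.antidiagonalTuple l.length k,
      if ∀ i, c i ≤ l.get i then genProd R (List.ofFn fun i => l.get i - c i) else 0 := by
  rw [sigMinusHom, hasseSchmidt_genProd, coeff_prod_map_of_coeff_eq_ite R (coeff_sigMinusGen R),
    one_pow, one_smul]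

theorem coeff_sbarPlusHom_genProd (l : List ℕ) (k : ℕ) :
    (sbarPlusHom R (genProd R l)).coeff k =
      (-1 : R) ^ k • ∑ c ∈ Finset.Nat.antidiagonalTuple l.length k,
        if ∀ i, c i ≤ 1 then genProd R (List.ofFn fun i => l.get i + c i) else 0 := by
  rw [sbarPlusHom, hasseSchmidt_genProd, coeff_prod_map_of_coeff_eq_ite R (coeff_sbarPlusGen R)]

theorem natDegree_sbarPlusHom_genProd_le (l : List ℕ) :
    (sbarPlusHom R (genProd R l)).natDegree ≤ l.length := by
  have hgen (j : ℕ) : (sbarPlusGen R j).natDegree ≤ 1 :=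
    natDegree_sub_le_of_le ((natDegree_monomial_le _).trans zero_le_one) (natDegree_monomial_le _)
  rw [sbarPlusHom, hasseSchmidt_genProd]
  refine (natDegree_list_prod_le _).trans ((List.sum_le_card_nsmul _ 1 ?_).trans (by simp))
  simpa using fun j _ => hgen j

theorem natDegree_sbarPlusHom_coeff_sigMinusHom_genProd_le (l : List ℕ) (c : ℕ) :
    (sbarPlusHom R ((sigMinusHom R (genProd R l)).coeff c)).natDegree ≤ l.length := by
  rw [coeff_sigMinusHom_genProd, map_sum]
  refine natDegree_sum_le_of_forall_le _ _ fun d _ => ?_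
  split_ifs
  · simpa using natDegree_sbarPlusHom_genProd_le R (List.ofFn fun i => l.get i - d i)
  · simp

end SchubertDerivations

section LaurentComposite

/-- The extension of `H : S → S[w]` to `S[w⁻¹]`, with values in the Laurent polynomials
`S[w, w⁻¹]`: the variable of the source stands for `w⁻¹`. -/
noncomputable def laurentLift {S : Type*} [Semiring S] (H : S →+* S[X]) : S[X] →+* S[T;T⁻¹] :=
  eval₂RingHom' (toLaurent.comp H) (T (-1)) fun _ => (LaurentPolynomial.commute_T _ _).symm

theorem laurentLift_monomial {S : Type*} [Semiring S] (H : S →+* S[X]) (c : ℕ) (a : S) :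
    laurentLift H (monomial c a) = toLaurent (H a) * T (-c) := by
  simp [laurentLift, eval₂RingHom', LaurentPolynomial.T_pow]

theorem coeff_laurentLift {S : Type*} [Semiring S] {H : S →+* S[X]} {f : S[X]} {r : ℕ}
    (hf : ∀ c, (H (f.coeff c)).natDegree ≤ r) (n : ℤ) :
    (laurentLift H f).coeff n = ∑ e ∈ Finset.range (r + 1),
      if n ≤ e then (H (f.coeff (e - n).toNat)).coeff e else 0 := by
  let N := max (f.natDegree + 1) (r - n + 1).toNat
  have hexpand : laurentLift H f = ∑ e ∈ Finset.range (r + 1), ∑ c ∈ Finset.range N,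
      .single (e - c) ((H (f.coeff c)).coeff e) := by
    conv_lhs => rw [f.as_sum_range' N (by omega)]
    rw [map_sum, Finset.sum_comm]
    refine Finset.sum_congr rfl fun c _ => ?_
    rw [laurentLift_monomial]
    conv_lhs => rw [(H (f.coeff c)).as_sum_range' (r + 1) (Nat.lt_succ_of_le (hf c))]
    rw [map_sum, Finset.sum_mul]
    refine Finset.sum_congr rfl fun e _ => ?_
    rw [← C_mul_X_pow_eq_monomial, toLaurent_C_mul_X_pow, LaurentPolynomial.mul_T_assoc,
      LaurentPolynomial.single_eq_C_mul_T, sub_eq_add_neg]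
  rw [hexpand]
  simp only [AddMonoidAlgebra.coeff_sum, Finsupp.finsetSum_apply, AddMonoidAlgebra.coeff_single,
    Finsupp.single_apply]
  refine Finset.sum_congr rfl fun e he => ?_
  have he' := Finset.mem_range.1 he
  split_ifs with h
  · rw [Finset.sum_eq_single (e - n).toNat]
    · rw [if_pos (by omega)]
    · intro c _ hc
      rw [if_neg (by omega)]
    · intro hc
      exact absurd (Finset.mem_range.2 (by omega)) hc
  · refine Finset.sum_eq_zero fun c _ => ?_
    rw [if_neg (by omega)]

variable (R : Type*) [CommRing R]

/-- The Schubert derivation `σ̄₊(w)` extended to polynomials in `w⁻¹`. -/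
noncomputable def sbarPlusLaurent : (ExteriorAlgebra R (ℕ →₀ R))[X] →+*
    (ExteriorAlgebra R (ℕ →₀ R))[T;T⁻¹] :=
  laurentLift (sbarPlusHom R : ExteriorAlgebra R (ℕ →₀ R) →+* (ExteriorAlgebra R (ℕ →₀ R))[X])

theorem coeff_sbarPlusLaurent {f : (ExteriorAlgebra R (ℕ →₀ R))[X]} {r : ℕ}
    (hf : ∀ c, (sbarPlusHom R (f.coeff c)).natDegree ≤ r) (n : ℤ) :
    (sbarPlusLaurent R f).coeff n = ∑ e ∈ Finset.range (r + 1),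
      if n ≤ e then (sbarPlusHom R (f.coeff (e - n).toNat)).coeff e else 0 :=
  coeff_laurentLift hf n

theorem sbarPlusLaurent_sigMinusGen (j : ℕ) : sbarPlusLaurent R (sigMinusGen R j) =
    LaurentPolynomial.C (gen R 0) * T (-j) - LaurentPolynomial.C (gen R (j + 1)) * T 1 := by
  let f (k : ℕ) := LaurentPolynomial.C (gen R (j + 1 - k)) * T (1 - k)
  have hstep : ∀ k ∈ Finset.range (j + 1),
      sbarPlusLaurent R (monomial k (gen R (j - k))) = f (k + 1) - f k := by
    intro k hk
    have hkj : j - k + 1 = j + 1 - k := by have := Finset.mem_range.1 hk; omega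
    rw [sbarPlusLaurent, laurentLift_monomial, RingHom.coe_coe, sbarPlusHom_gen, sbarPlusGen,
      map_sub, ← C_mul_X_pow_eq_monomial, ← C_mul_X_pow_eq_monomial, toLaurent_C_mul_X_pow,
      toLaurent_C_mul_X_pow, sub_mul, LaurentPolynomial.mul_T_assoc,
      LaurentPolynomial.mul_T_assoc, hkj]
    simp [f, sub_eq_add_neg]
  rw [sigMinusGen, map_sum, Finset.sum_congr rfl hstep, Finset.sum_range_sub]
  simp [f]

theorem sbarPlusLaurent_sigMinusHom_genProd_mul_gen_zero (l : List ℕ) :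
    sbarPlusLaurent R (sigMinusHom R (genProd R l)) * LaurentPolynomial.C (gen R 0) =
      LaurentPolynomial.C (gen R 0 * genProd R (l.map (· + 1))) * T l.length := by
  induction l with
  | nil => simp [genProd]
  | cons j l ih =>
    set m := genProd R (l.map (· + 1))
    have hkill : LaurentPolynomial.C (gen R 0) * T (-j : ℤ) *
        (LaurentPolynomial.C (gen R 0 * m) * T l.length) = 0 := by
      rw [mul_assoc, ← mul_assoc (T _), LaurentPolynomial.T_mul, mul_assoc, ← mul_assoc, ← map_mul,
        ← mul_assoc (gen R 0), gen_mul_self, zero_mul, map_zero, zero_mul]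
    calc sbarPlusLaurent R (sigMinusHom R (genProd R (j :: l))) * LaurentPolynomial.C (gen R 0)
      _ = (LaurentPolynomial.C (gen R 0) * T (-j) - LaurentPolynomial.C (gen R (j + 1)) * T 1) *
          (LaurentPolynomial.C (gen R 0 * m) * T l.length) := by
        rw [genProd_cons, map_mul, map_mul, mul_assoc, ih, sigMinusHom_gen,
          sbarPlusLaurent_sigMinusGen]
      _ = -(LaurentPolynomial.C (gen R (j + 1) * (gen R 0 * m)) * T (l.length + 1)) := by
        rw [sub_mul, hkill, zero_sub, mul_assoc, ← mul_assoc (T _), LaurentPolynomial.T_mul,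
          LaurentPolynomial.mul_T_assoc, ← mul_assoc, ← map_mul, add_comm 1]
      _ = _ := by
        rw [gen_mul_gen_mul_swap, map_neg, neg_mul, neg_neg, List.map_cons, genProd_cons,
          List.length_cons, Nat.cast_succ]

theorem sum_coeff_sbarPlusHom_coeff_sigMinusHom_genProd_mul_gen_zero (l : List ℕ) (b : ℤ) :
    (∑ e ∈ Finset.range (l.length + 1), if b + l.length ≤ e then
      (sbarPlusHom R ((sigMinusHom R (genProd R l)).coeff (e - b - l.length).toNat)).coeff e *
        gen R 0 else 0) =
      if b = 0 then gen R 0 * genProd R (l.map (· + 1)) else 0 := by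
  have h := congrArg (·.coeff (b + l.length))
    (sbarPlusLaurent_sigMinusHom_genProd_mul_gen_zero R l)
  rw [← LaurentPolynomial.single_eq_C, AddMonoidAlgebra.coeff_mul_single_zero,
    ← LaurentPolynomial.single_eq_C_mul_T,
    AddMonoidAlgebra.coeff_single, Finsupp.single_apply,
    coeff_sbarPlusLaurent R (natDegree_sbarPlusHom_coeff_sigMinusHom_genProd_le R l)] at h
  simpa [Finset.sum_mul, ite_mul, sub_sub] using h

end LaurentComposite

section Linearity

variable (A : Type*) [CommSemiring A]

/-- The wedge product as a bilinear map. -/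
noncomputable def wedgeBilin : Ext A →ₗ[A] Ext A →ₗ[A] Ext A :=
  Finsupp.linearCombination A fun b => Finsupp.linearCombination A (wB A b)

theorem wedge_eq_wedgeBilin (u v : Ext A) : wedge A u v = wedgeBilin A u v := by
  simp [wedge, wedgeBilin, Finsupp.linearCombination_apply, Finsupp.sum, LinearMap.sum_apply,
    Finset.smul_sum, mul_smul]

theorem wedge_single_single (b c : XB) (a a' : A) :
    wedge A (Finsupp.single b a) (Finsupp.single c a') = (a * a') • wB A b c := by
  simp [wedge_eq_wedgeBilin, wedgeBilin, mul_smul]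

theorem ext1_eq_linearCombination (g : XB → Ext A) (u : Ext A) :
    ext1 A g u = Finsupp.linearCombination A g u := rfl

theorem wedgeMon_cons (i : ℕ) (l : List ℕ) :
    wedgeMon A (i :: l) = wedge A (xg A i) (wedgeMon A l) := rfl

theorem xg_eq_single (i : ℕ) :
    xg A i = Finsupp.single (some (true, ⟨{i}, Finset.singleton_nonempty i⟩)) 1 := by
  rw [xg, bElem, dif_pos (Finset.singleton_nonempty i)]

theorem negB_injective : Function.Injective negB :=
  Function.LeftInverse.injective (g := negB) <| by rintro (_ | ⟨ε, s⟩) <;> simp [negB]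

theorem neg_apply_negB (u : Ext A) (b : XB) : neg A u (negB b) = u b :=
  Finsupp.mapDomain_apply negB_injective u b

theorem negpow_apply_none (k : ℕ) (u : Ext A) : negpow A k u none = u none := by
  unfold negpow
  split_ifs
  exacts [rfl, neg_apply_negB A u none]

theorem wB_eq_zero_or_single (b c : XB) :
    wB A b c = 0 ∨ ∃ d, wB A b c = Finsupp.single d 1 := by
  rcases b with _ | b <;> rcases c with _ | c
  · exact Or.inr ⟨_, rfl⟩
  · exact Or.inr ⟨_, rfl⟩
  · exact Or.inr ⟨_, rfl⟩
  · simp only [wB, bElem]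
    split_ifs
    exacts [Or.inr ⟨_, rfl⟩, Or.inr ⟨_, rfl⟩, Or.inl rfl]

theorem wedgeMon_eq_zero_or_single (l : List ℕ) :
    wedgeMon A l = 0 ∨ ∃ b, wedgeMon A l = Finsupp.single b 1 := by
  induction l with
  | nil => exact Or.inr ⟨none, rfl⟩
  | cons i l ih =>
    rw [wedgeMon_cons]
    rcases ih with h | ⟨b, h⟩
    · exact Or.inl (by rw [h, wedge_eq_wedgeBilin, map_zero])
    · rw [h, xg_eq_single, wedge_single_single, mul_one, one_smul]
      exact wB_eq_zero_or_single A _ b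

theorem wB_some_apply_none (b : Bool × {s : Finset ℕ // s.Nonempty}) (c : XB) :
    wB A (some b) c none = 0 := by
  rcases c with _ | c
  · simp [wB]
  · simp only [wB]
    split_ifs
    · simp [bElem, b.2.2.inl]
    · rfl

theorem wedgeMon_apply_none {l : List ℕ} (hl : l ≠ []) : wedgeMon A l none = 0 := by
  obtain ⟨i, l, rfl⟩ := List.exists_cons_of_ne_nil hl
  rw [wedgeMon_cons, xg_eq_single]
  rcases wedgeMon_eq_zero_or_single A l with h | ⟨b, h⟩
  · rw [h, wedge_eq_wedgeBilin, map_zero, Finsupp.zero_apply]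
  · rw [h, wedge_single_single, mul_one, one_smul, wB_some_apply_none]

theorem sum_ite_wedgeMon_apply_none {J : Type*} (s : Finset J) (P : J → Prop) [DecidablePred P]
    {f : J → List ℕ} (hf : ∀ c, f c ≠ []) :
    (∑ c ∈ s, if P c then wedgeMon A (f c) else 0) none = 0 := by
  rw [Finsupp.finsetSum_apply]
  refine Finset.sum_eq_zero fun c _ => ?_
  split_ifs
  exacts [wedgeMon_apply_none A (hf c), rfl]

theorem sigMinusL_apply_none (k : ℕ) {l : List ℕ} (hl : l ≠ []) : sigMinusL A k l none = 0 :=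
  sum_ite_wedgeMon_apply_none A _ _ fun c => by simpa [List.ofFn_eq_nil_iff] using hl

theorem sbarPlusL_apply_none (k : ℕ) {l : List ℕ} (hl : l ≠ []) : sbarPlusL A k l none = 0 :=
  (negpow_apply_none A k _).trans <|
    sum_ite_wedgeMon_apply_none A _ _ fun c => by simpa [List.ofFn_eq_nil_iff] using hl

end Linearity

section BaseChange

variable {A B : Type*} [CommSemiring A] [CommSemiring B] (f : A →+* B)

/-- Base change of the exterior semialgebra along a homomorphism of semirings. -/
noncomputable def baseChange : Ext A →ₛₗ[f] Ext B := Finsupp.mapRange.linearMap f.toSemilinearMap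

@[simp]
theorem baseChange_single (b : XB) (a : A) :
    baseChange f (Finsupp.single b a) = Finsupp.single b (f a) := by
  simp [baseChange]

@[simp]
theorem baseChange_bElem (ε : Bool) (t : Finset ℕ) :
    baseChange f (bElem A ε t) = bElem B ε t := by
  unfold bElem
  split_ifs <;> simp

@[simp]
theorem baseChange_one : baseChange f (one A) = one B := by simp [one]

@[simp]
theorem baseChange_xg (i : ℕ) : baseChange f (xg A i) = xg B i := baseChange_bElem f _ _

theorem baseChange_wB (b c : XB) : baseChange f (wB A b c) = wB B b c := by
  rcases b with _ | b <;> rcases c with _ | c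
  · simp [wB]
  · simp [wB]
  · simp [wB]
  · simp [wB, apply_ite (baseChange f)]

@[simp]
theorem baseChange_wedge (u v : Ext A) :
    baseChange f (wedge A u v) = wedge B (baseChange f u) (baseChange f v) := by
  induction u using Finsupp.induction_linear with
  | zero => simp [wedge_eq_wedgeBilin]
  | add u u' hu hu' => simp_all [wedge_eq_wedgeBilin]
  | single b a =>
    induction v using Finsupp.induction_linear with
    | zero => simp [wedge_eq_wedgeBilin]
    | add v v' hv hv' => simp_all [wedge_eq_wedgeBilin]
    | single c a' =>
      rw [wedge_single_single, map_smulₛₗ, baseChange_wB, baseChange_single, baseChange_single,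
        wedge_single_single, map_mul]

@[simp]
theorem baseChange_neg (u : Ext A) : baseChange f (neg A u) = neg B (baseChange f u) := by
  induction u using Finsupp.induction_linear with
  | zero => simp
  | add u u' hu hu' => simp [hu, hu']
  | single b a => simp [neg, Finsupp.mapDomain_single]

@[simp]
theorem baseChange_wedgeMon (l : List ℕ) : baseChange f (wedgeMon A l) = wedgeMon B l := by
  induction l with
  | nil => exact baseChange_one f
  | cons i l ih => rw [wedgeMon_cons, baseChange_wedge, baseChange_xg, ih, wedgeMon_cons]

theorem baseChange_ext1 {g : XB → Ext A} {g' : XB → Ext B} (h : ∀ b, baseChange f (g b) = g' b)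
    (u : Ext A) : baseChange f (ext1 A g u) = ext1 B g' (baseChange f u) := by
  simp only [ext1_eq_linearCombination]
  induction u using Finsupp.induction_linear with
  | zero => simp
  | add u u' hu hu' => simp [hu, hu']
  | single b a => simp [map_smulₛₗ, h]

theorem baseChange_hsOn {F : ℕ → List ℕ → Ext A} {F' : ℕ → List ℕ → Ext B}
    (h : ∀ k l, baseChange f (F k l) = F' k l) (k : ℕ) (b : XB) :
    baseChange f (hsOn A F k b) = hsOn B F' k b := by
  rcases b with _ | ⟨ε, s⟩
  · simp [hsOn, apply_ite (baseChange f)]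
  · simp [hsOn, twist, apply_ite (baseChange f), h]

@[simp]
theorem baseChange_sigMinus (k : ℕ) (u : Ext A) :
    baseChange f (sigMinus A k u) = sigMinus B k (baseChange f u) :=
  baseChange_ext1 f (baseChange_hsOn f (F' := sigMinusL B)
    (fun k l => by simp [sigMinusL, apply_ite (baseChange f)]) k) u

@[simp]
theorem baseChange_sbarPlus (k : ℕ) (u : Ext A) :
    baseChange f (sbarPlus A k u) = sbarPlus B k (baseChange f u) :=
  baseChange_ext1 f (baseChange_hsOn f (F' := sbarPlusL B)
    (fun k l => by simp [sbarPlusL, negpow, apply_ite (baseChange f)]) k) u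

theorem Prec.baseChange {u v : Ext A} (h : Prec A u v) :
    Prec B (baseChange f u) (baseChange f v) := by
  obtain ⟨_, ⟨w, rfl⟩, rfl⟩ := h
  exact ⟨_, ⟨ExtSemi.baseChange f w, rfl⟩, by simp⟩

end BaseChange

/-- The sign `±1` encoded by a `Bool`, `true` standing for `+1`. -/
def signInt (ε : Bool) : ℤ := if ε then 1 else -1

theorem signInt_beq (ε δ : Bool) : signInt (ε == δ) = signInt ε * signInt δ := by
  cases ε <;> cases δ <;> rfl

theorem signInt_mergeEven (s t : Finset ℕ) :
    signInt (mergeEven s t) = (-1) ^ ∑ a ∈ s, (t.filter (a < ·)).card := by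
  rcases Nat.even_or_odd (∑ a ∈ s, (t.filter (a < ·)).card) with h | h
  · simp [signInt, mergeEven, h.neg_one_pow, Nat.even_iff.1 h]
  · simp [signInt, mergeEven, h.neg_one_pow, Nat.odd_iff.1 h]

/-- The value of `toExterior` on the basis. -/
noncomputable def basisToExterior : XB → ExteriorAlgebra ℤ (ℕ →₀ ℤ)
  | none => 1
  | some (ε, s) => signInt ε • decProd ℤ s.1

/-- The comparison map from the exterior semialgebra over `ℕ` to the exterior algebra over `ℤ`,
sending `(ε, s)` to `ε` times the decreasing product over `s`. -/
noncomputable def toExterior : Ext ℕ →ₗ[ℕ] ExteriorAlgebra ℤ (ℕ →₀ ℤ) :=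
  Finsupp.linearCombination ℕ basisToExterior

theorem toExterior_single (b : XB) (n : ℕ) :
    toExterior (Finsupp.single b n) = n • basisToExterior b := by
  simp [toExterior]

theorem toExterior_one : toExterior (one ℕ) = 1 := by simp [one, toExterior_single, basisToExterior]

theorem toExterior_bElem {t : Finset ℕ} (ht : t.Nonempty) (ε : Bool) :
    toExterior (bElem ℕ ε t) = signInt ε • decProd ℤ t := by
  rw [bElem, dif_pos ht, toExterior_single, one_smul, basisToExterior]

theorem toExterior_xg (i : ℕ) : toExterior (xg ℕ i) = gen ℤ i := by
  simp [xg, toExterior_bElem, signInt]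

theorem toExterior_wB (b c : XB) :
    toExterior (wB ℕ b c) = basisToExterior b * basisToExterior c := by
  rcases b with _ | ⟨ε, s⟩ <;> rcases c with _ | ⟨δ, t⟩
  · simp [wB, toExterior_single, basisToExterior]
  · simp [wB, toExterior_single, basisToExterior]
  · simp [wB, toExterior_single, basisToExterior]
  · simp only [wB, basisToExterior, smul_mul_smul_comm, ← Finset.disjoint_iff_inter_eq_empty]
    split_ifs with h
    · rw [toExterior_bElem s.2.inl, signInt_beq, signInt_beq, signInt_mergeEven,
        decProd_mul_decProd_of_disjoint ℤ h, smul_smul]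
    · rw [decProd_mul_decProd_of_not_disjoint ℤ h, smul_zero, map_zero]

theorem toExterior_wedge (u v : Ext ℕ) :
    toExterior (wedge ℕ u v) = toExterior u * toExterior v := by
  induction u using Finsupp.induction_linear with
  | zero => simp [wedge_eq_wedgeBilin]
  | add u u' hu hu' => simp_all [wedge_eq_wedgeBilin, add_mul]
  | single b n =>
    induction v using Finsupp.induction_linear with
    | zero => simp [wedge_eq_wedgeBilin]
    | add v v' hv hv' => simp_all [wedge_eq_wedgeBilin, mul_add]
    | single c m =>
      rw [wedge_single_single, map_smul, toExterior_wB, toExterior_single, toExterior_single,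
        smul_mul_smul_comm]

theorem toExterior_wedgeMon (l : List ℕ) : toExterior (wedgeMon ℕ l) = genProd ℤ l := by
  induction l with
  | nil => exact toExterior_one
  | cons i l ih => rw [wedgeMon_cons, toExterior_wedge, toExterior_xg, ih, genProd_cons]

theorem toExterior_neg_add (u : Ext ℕ) :
    toExterior (neg ℕ u) + toExterior u = (2 * u none) • 1 := by
  induction u using Finsupp.induction_linear with
  | zero => simp
  | add u u' hu hu' =>
    rw [map_add, map_add, map_add, add_add_add_comm, hu, hu', Finsupp.add_apply, mul_add, add_smul]
  | single b n =>
    rw [neg, Finsupp.lmapDomain_apply, Finsupp.mapDomain_single, toExterior_single,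
      toExterior_single]
    rcases b with _ | ⟨ε, s⟩
    · simp [negB, basisToExterior, two_mul, add_smul]
    · cases ε <;> simp [negB, basisToExterior, signInt]

theorem toExterior_neg {u : Ext ℕ} (hu : u none = 0) :
    toExterior (neg ℕ u) = -toExterior u :=
  eq_neg_of_add_eq_zero_left <| by rw [toExterior_neg_add, hu, mul_zero, zero_smul]

theorem toExterior_twist {u : Ext ℕ} (hu : u none = 0) (ε : Bool) :
    toExterior (twist ℕ ε u) = signInt ε • toExterior u := by
  cases ε <;> simp [twist, signInt, toExterior_neg hu]

theorem toExterior_negpow {u : Ext ℕ} (hu : u none = 0) (k : ℕ) :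
    toExterior (negpow ℕ k u) = (-1 : ℤ) ^ k • toExterior u := by
  unfold negpow
  split_ifs with hk
  · rw [(Nat.even_iff.2 hk).neg_one_pow, one_smul]
  · rw [(Nat.odd_iff.2 (Nat.mod_two_ne_zero.1 hk)).neg_one_pow, toExterior_neg hu, neg_smul,
      one_smul]

theorem descList_eq_sort (s : Finset ℕ) : descList s = s.sort (· ≥ ·) :=
  List.Perm.eq_of_pairwise' (r := (· ≥ ·)) (List.pairwise_reverse.2 (s.pairwise_sort (· ≤ ·)))
    (s.pairwise_sort (· ≥ ·)) <| (List.reverse_perm _).trans <|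
      (Finset.sort_perm_toList s _).trans (Finset.sort_perm_toList s _).symm

theorem toExterior_ext1_hsOn
    {H : ExteriorAlgebra ℤ (ℕ →₀ ℤ) →ₐ[ℤ] (ExteriorAlgebra ℤ (ℕ →₀ ℤ))[X]}
    {F : ℕ → List ℕ → Ext ℕ} {k : ℕ} (hnone : ∀ l ≠ [], F k l none = 0)
    (hF : ∀ l ≠ [], toExterior (F k l) = (H (genProd ℤ l)).coeff k) (u : Ext ℕ) :
    toExterior (ext1 ℕ (hsOn ℕ F k) u) = (H (toExterior u)).coeff k := by
  rw [ext1_eq_linearCombination]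
  induction u using Finsupp.induction_linear with
  | zero => simp
  | add u u' hu hu' => simp [hu, hu']
  | single b n =>
    rw [Finsupp.linearCombination_single, map_smul, toExterior_single, map_nsmul, coeff_smul]
    congr 1
    rcases b with _ | ⟨ε, s⟩
    · simp [hsOn, basisToExterior, apply_ite toExterior, toExterior_one, coeff_one]
    · have hs : descList s.1 ≠ [] :=
        List.ne_nil_of_mem (a := s.2.choose) (by simpa [descList] using s.2.choose_spec)
      rw [hsOn, toExterior_twist (hnone _ hs), hF _ hs, basisToExterior, map_smul, coeff_smul,
        descList_eq_sort, decProd]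

theorem toExterior_sigMinus (k : ℕ) (u : Ext ℕ) :
    toExterior (sigMinus ℕ k u) = (sigMinusHom ℤ (toExterior u)).coeff k :=
  toExterior_ext1_hsOn (fun _ hl => sigMinusL_apply_none ℕ k hl) (fun l _ => by
    simp [sigMinusL, coeff_sigMinusHom_genProd, apply_ite toExterior, toExterior_wedgeMon]) u

theorem toExterior_sbarPlus (k : ℕ) (u : Ext ℕ) :
    toExterior (sbarPlus ℕ k u) = (sbarPlusHom ℤ (toExterior u)).coeff k :=
  toExterior_ext1_hsOn (fun _ hl => sbarPlusL_apply_none ℕ k hl) (fun l hl => by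
    rw [sbarPlusL, toExterior_negpow, coeff_sbarPlusHom_genProd]
    · simp [apply_ite toExterior, toExterior_wedgeMon]
    · exact sum_ite_wedgeMon_apply_none ℕ _ _ fun c => by
        simpa [List.ofFn_eq_nil_iff] using hl) u

theorem decBasis_repr_toExterior_empty (u : Ext ℕ) :
    (decBasis ℤ).repr (toExterior u) ∅ = u none := by
  induction u using Finsupp.induction_linear with
  | zero => simp
  | add u u' hu hu' => simp [hu, hu']
  | single b n =>
    rw [toExterior_single, map_nsmul]
    rcases b with _ | ⟨ε, t⟩
    · simp [basisToExterior, decBasis_repr_one]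
    · rw [basisToExterior, map_smul, decBasis_repr_decProd]
      simp [t.2.ne_empty]

theorem decBasis_repr_toExterior (u : Ext ℕ) (s : {s : Finset ℕ // s.Nonempty}) :
    (decBasis ℤ).repr (toExterior u) s.1 = u (some (true, s)) - u (some (false, s)) := by
  induction u using Finsupp.induction_linear with
  | zero => simp
  | add u u' hu hu' => simp [hu, hu', add_sub_add_comm]
  | single b n =>
    rw [toExterior_single, map_nsmul]
    rcases b with _ | ⟨ε, t⟩
    · simp [basisToExterior, decBasis_repr_one, s.2.ne_empty.symm]
    · rw [basisToExterior, map_smul, decBasis_repr_decProd]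
      by_cases h : t = s <;> cases ε <;> simp [h, signInt, ← Subtype.ext_iff]

/-- `v = u + w + (−)w`, where `w` is the part of `v - u` on the positive basis elements. -/
theorem prec_of_toExterior_eq {u v : Ext ℕ} (h : toExterior u = toExterior v)
    (hu : ∀ s, u (some (true, s)) = 0 ∨ u (some (false, s)) = 0) : Prec ℕ u v := by
  classical
  let w : Ext ℕ := (v - u).filter fun b => ∃ s, b = some (true, s)
  refine ⟨_, ⟨w, rfl⟩, ?_⟩
  have hnone : u none = v none := by
    exact_mod_cast (decBasis_repr_toExterior_empty u).symm.trans
      (h ▸ decBasis_repr_toExterior_empty v)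
  ext b
  rw [Finsupp.add_apply, Finsupp.add_apply]
  rcases b with _ | ⟨ε, s⟩
  · have hw : w none = 0 := Finsupp.filter_apply_neg _ _ (by simp)
    have hneg : neg ℕ w none = w none := neg_apply_negB ℕ w none
    omega
  · have hw_true : w (some (true, s)) = v (some (true, s)) - u (some (true, s)) :=
      Finsupp.filter_apply_pos _ _ ⟨s, rfl⟩
    have hw_false : w (some (false, s)) = 0 := Finsupp.filter_apply_neg _ _ (by simp)
    have hneg_true : neg ℕ w (some (true, s)) = w (some (false, s)) :=
      neg_apply_negB ℕ w (some (false, s))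
    have hneg_false : neg ℕ w (some (false, s)) = w (some (true, s)) :=
      neg_apply_negB ℕ w (some (true, s))
    have hdiff := (decBasis_repr_toExterior u s).symm.trans (h ▸ decBasis_repr_toExterior v s)
    have := hu s
    cases ε <;> omega

theorem prec_sum_wedge_sbarPlus_sigMinus_nat (l : List ℕ) (b : ℤ) :
    Prec ℕ (if b = 0 then wedge ℕ (xg ℕ 0) (wedgeMon ℕ (l.map (· + 1))) else 0)
      (∑ e ∈ Finset.range (l.length + 1), if b + l.length ≤ e then
        wedge ℕ (sbarPlus ℕ e (sigMinus ℕ (e - b - l.length).toNat (wedgeMon ℕ l))) (xg ℕ 0)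
      else 0) := by
  refine prec_of_toExterior_eq ?_ fun s => ?_
  · simp only [apply_ite toExterior, map_sum, map_zero, toExterior_wedge, toExterior_xg,
      toExterior_wedgeMon, toExterior_sbarPlus, toExterior_sigMinus]
    exact (sum_coeff_sbarPlusHom_coeff_sigMinusHom_genProd_mul_gen_zero ℤ l b).symm
  · rw [← wedgeMon_cons]
    split_ifs
    · rcases wedgeMon_eq_zero_or_single ℕ (0 :: l.map (· + 1)) with h | ⟨β, h⟩
      · simp [h]
      · rw [h]
        by_cases hβ : β = some (true, s) <;> simp [hβ]
    · simp

theorem wedge_x0_surpassed_general (A : Type*) [CommSemiring A] (l : List ℕ) (b : ℤ) :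
    Prec A (if b = 0 then wedge A (xg A 0) (wedgeMon A (l.map (· + 1))) else 0)
      (∑ e ∈ Finset.range (l.length + 1), if b + l.length ≤ e then
        wedge A (sbarPlus A e (sigMinus A (e - b - l.length).toNat (wedgeMon A l))) (xg A 0)
      else 0) := by
  simpa [apply_ite (baseChange (Nat.castRingHom A))] using
    (prec_sum_wedge_sbarPlus_sigMinus_nat l b).baseChange (Nat.castRingHom A)

/-- For every `r ≥ 1` and every partition `λ` with at most `r`
parts, writing `λ + (1^r) = (λ_1+1, …, λ_r+1)`:
`x^0 ∧ [x]^r_{λ+(1^r)} ⪯ w^{−r} · (σ̄₊(w)(σ₋(w)[x]^r_λ)) ∧ x^0`,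
coefficientwise in the powers `w^b` (`b ∈ ℤ`).  On the right the coefficient of
`w^b` is the sum over decompositions `−r + e − c = b`, with `σ̄₊` contributing
`w^e` (vanishing for `e > r`) and `σ₋` contributing `w^{−c}`. -/
theorem wedge_x0_surpassed (A : Type*) [CommSemiring A]
    (r : ℕ) (hr : 1 ≤ r) (lam : Fin r → ℕ) (hlam : Antitone lam) (b : ℤ) :
    Prec A
      (if b = 0 then wedge A (xg A 0) (xlam A r (fun i => lam i + 1)) else 0)
      (∑ e ∈ Finset.range (r + 1),
        if b + (r : ℤ) ≤ (e : ℤ) then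
          wedge A
            (sbarPlus A e (sigMinus A (((e : ℤ) - b - (r : ℤ)).toNat) (xlam A r lam)))
            (xg A 0)
        else 0) := by
  simpa [xlam, List.map_ofFn, Function.comp_def, add_assoc] using
    wedge_x0_surpassed_general A (List.ofFn fun i : Fin r => r - 1 - i + lam i) b

end ExtSemi
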